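/- arXiv:2509.10204 — 3 statements merged into one kernel-verified Lean document; each statement's English description precedes it below -/
import Mathlib

section
/- Let G be a group whose subgroup lattice satisfies the ascending chain condition, and let f : G →* G be a surjective group homomorphism. Then f is injective (hence an automorphism); that is, Noetherian groups are Hopfian. -/
/-!
Pulling congruences back along a surjective endomorphism `f` is a strictly monotone self-map of the
congruence lattice. It sends `⊥` to the kernel congruence of `f`, so if `f` were not injective, then
iterating it from `⊥` would give a strictly ascending chain, the kernels of the powers of `f`.
On a group, congruences are the same as normal subgroups.
-/

theorem not_lt_map_of_strictMono {α : Type*} [Preorder α] [WellFoundedGT α] {g : α → α}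
    (hg : StrictMono g) (a : α) : ¬ a < g a :=
  fun h ↦ not_strictMono_of_wellFoundedGT _ (hg.strictMono_iterate_of_lt_map h)

section Congruence

variable {M N : Type*} [Mul M] [Mul N] {f : M →ₙ* N}

theorem strictMono_con_comap (hf : Function.Surjective f) :
    StrictMono (Con.comap f (map_mul f)) :=
  have hmono : Monotone (Con.comap f (map_mul f)) := fun _ _ hcd _ _ h ↦ hcd h
  hmono.strictMono_of_injective (Con.comap_injective f hf (map_mul f))

theorem injective_iff_con_comap_bot :
    Function.Injective f ↔ Con.comap f (map_mul f) ⊥ = ⊥ := by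
  rw [Setoid.injective_iff_ker_bot, ← Con.toSetoid_eq_bot]
  rfl

end Congruence

theorem noetherian_group_hopfian_general {M : Type*} [Mul M] [WellFoundedGT (Con M)]
    (f : M →ₙ* M) (hf : Function.Surjective f) :
    Function.Injective f := by
  have hker : ¬ ⊥ < Con.comap f (map_mul f) ⊥ :=
    not_lt_map_of_strictMono (strictMono_con_comap hf) ⊥
  exact injective_iff_con_comap_bot.mpr (not_bot_lt_iff.mp hker)

theorem noetherian_group_hopfian {G : Type*} [Group G]
    (hG : WellFoundedGT (Subgroup G)) (f : G →* G) (hf : Function.Surjective f) :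
    Function.Injective f :=
  have : WellFoundedGT (Con G) := Subgroup.orderIsoCon.symm.strictMono.wellFoundedGT
  noetherian_group_hopfian_general f.toMulHom hf
end

section
/- Let G be a group and let N be a normal subgroup of G. If the subgroup lattice of N satisfies the descending chain condition and the subgroup lattice of the quotient group G/N satisfies the descending chain condition, then the subgroup lattice of G satisfies the descending chain condition. (Artinian groups are closed under extensions.) -/
/-!
A proper inclusion of subgroups of `G` must stay proper either on the trace in `N` or on the image
in `G ⧸ N`: this is Dedekind's modular law. So `A ↦ (A ∩ N, AN/N)` is a strictly monotone map into
a product of two well-founded orders.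
-/

section ExactSequence

variable {H G Q : Type*} [Group H] [Group G] [Group Q]

theorem subgroup_le_of_inf_ker_le_of_map_le {g : G →* Q} {A B : Subgroup G} (hAB : A ≤ B)
    (hker : B ⊓ g.ker ≤ A) (hmap : B.map g ≤ A.map g) : B ≤ A := by
  intro b hb
  obtain ⟨a, ha, hgab⟩ : ∃ a ∈ A, g a = g b := hmap (Subgroup.mem_map_of_mem g hb)
  have mem_B : a⁻¹ * b ∈ B := B.mul_mem (B.inv_mem (hAB ha)) hb
  have mem_ker : a⁻¹ * b ∈ g.ker := g.eq_iff.mp hgab.symm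
  exact (A.mul_mem_cancel_left (A.inv_mem ha)).mp (hker ⟨mem_B, mem_ker⟩)

theorem strictMono_subgroup_comap_map {f : H →* G} {g : G →* Q} (hfg : g.ker ≤ f.range) :
    StrictMono fun A : Subgroup G => (A.comap f, A.map g) := by
  intro A B hAB
  refine lt_of_le_not_ge ⟨Subgroup.comap_mono hAB.le, Subgroup.map_mono hAB.le⟩ ?_
  rintro ⟨hcomap : B.comap f ≤ A.comap f, hmap : B.map g ≤ A.map g⟩
  have hker : B ⊓ g.ker ≤ A := calc
    B ⊓ g.ker ≤ f.range ⊓ B := le_inf (inf_le_right.trans hfg) inf_le_left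
    _ = (B.comap f).map f := (Subgroup.map_comap_eq f B).symm
    _ ≤ A := Subgroup.map_le_iff_le_comap.mpr hcomap
  exact hAB.not_ge (subgroup_le_of_inf_ker_le_of_map_le hAB.le hker hmap)

theorem artinian_group_extension_general [WellFoundedLT (Subgroup H)] [WellFoundedLT (Subgroup Q)]
    {f : H →* G} {g : G →* Q} (hfg : g.ker ≤ f.range) :
    WellFoundedLT (Subgroup G) :=
  (strictMono_subgroup_comap_map hfg).wellFoundedLT

end ExactSequence

theorem artinian_group_extension (G : Type*) [Group G] (N : Subgroup G) [N.Normal]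
    (hN : WellFoundedLT (Subgroup N)) (hQ : WellFoundedLT (Subgroup (G ⧸ N))) :
    WellFoundedLT (Subgroup G) := by
  have hker : (QuotientGroup.mk' N).ker ≤ N.subtype.range := by
    rw [QuotientGroup.ker_mk', Subgroup.range_subtype]
  exact artinian_group_extension_general hker
end

section
/- Let M, M', N, N' be monoids and let f : M →* N, f' : M' →* N', β : M' →* M, γ : N' →* N be monoid homomorphisms with f ∘ β = γ ∘ f'. Assume: γ is injective; β is injective on the set {x : M' | f' x = 1}; f' is weakly uniform; and β is cancellative. Then β is injective. -/
/-- A monoid homomorphism `f : M →* N` is weakly uniform if whenever `f m₁ = f m₂`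
there exist `m k₁ k₂` with `f k₁ = 1`, `f k₂ = 1`, `m₁ = m * k₁` and `m₂ = m * k₂`. -/
def MonoidHom.WeaklyUniform {M N : Type*} [Monoid M] [Monoid N] (f : M →* N) : Prop :=
  ∀ m₁ m₂ : M, f m₁ = f m₂ →
    ∃ m k₁ k₂ : M, f k₁ = 1 ∧ f k₂ = 1 ∧ m₁ = m * k₁ ∧ m₂ = m * k₂

/-- A monoid homomorphism `β` is cancellative if `β m * β m₁ = β m * β m₂`
implies `β m₁ = β m₂`. -/
def MonoidHom.Cancellative {M' M : Type*} [Monoid M'] [Monoid M] (β : M' →* M) : Prop :=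
  ∀ m m₁ m₂ : M', β m * β m₁ = β m * β m₂ → β m₁ = β m₂

theorem factorsThrough_of_comp_eq_comp {α β γ δ : Sort*} {f : β → δ} {g : α → β}
    {h : γ → δ} {k : α → γ} (hcomm : f ∘ g = h ∘ k) (hh : Function.Injective h) :
    k.FactorsThrough g := fun x y hxy => hh <|
  calc
    h (k x) = f (g x) := (congrFun hcomm x).symm
    _ = f (g y) := congrArg f hxy
    _ = h (k y) := congrFun hcomm y

theorem injOn_fiber_of_injOn_ker {M N P : Type*} [Monoid M] [Monoid N] [Monoid P]
    {f : M →* N} {β : M →* P} (hβker : Set.InjOn β {x : M | f x = 1})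
    (hf : f.WeaklyUniform) (hβ : β.Cancellative) (n : N) :
    Set.InjOn β {x : M | f x = n} := by
  intro x hx y hy hxy
  obtain ⟨m, k₁, k₂, hk₁, hk₂, rfl, rfl⟩ := hf x y (hx.trans hy.symm)
  have hβk : β k₁ = β k₂ := hβ m k₁ k₂ (by simpa only [map_mul] using hxy)
  exact congrArg (m * ·) (hβker hk₁ hk₂ hβk)

theorem injective_of_square_general {M M' N N' : Type*}
    [Monoid M] [Monoid M'] [Monoid N']
    (f : M → N) (f' : M' →* N') (β : M' →* M) (γ : N' → N)
    (hcomm : f ∘ β = γ ∘ f')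
    (hγ : Function.Injective γ)
    (hβker : Set.InjOn β {x : M' | f' x = 1})
    (hf' : f'.WeaklyUniform)
    (hβ : β.Cancellative) :
    Function.Injective β := by
  intro x y hxy
  have hfiber : f' x = f' y := factorsThrough_of_comp_eq_comp hcomm hγ hxy
  exact injOn_fiber_of_injOn_ker hβker hf' hβ (f' y) hfiber rfl hxy

theorem injective_of_square {M M' N N' : Type*}
    [Monoid M] [Monoid M'] [Monoid N] [Monoid N']
    (f : M →* N) (f' : M' →* N') (β : M' →* M) (γ : N' →* N)
    (hcomm : f.comp β = γ.comp f')
    (hγ : Function.Injective γ)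
    (hβker : Set.InjOn β {x : M' | f' x = 1})
    (hf' : f'.WeaklyUniform)
    (hβ : β.Cancellative) :
    Function.Injective β :=
  injective_of_square_general f f' β γ (congrArg DFunLike.coe hcomm) hγ hβker hf' hβ
end
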